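/- arXiv:2309.13727 — 4 statements merged into one kernel-verified Lean document; each statement's English description precedes it below -/
import Mathlib

section
/- In any nondegenerate triangle, the distance from the incenter X1 to the circumcenter X3 satisfies dist(X1, X3) ≥ (1 + √3)·dist(X1, X6), where X6 is the symmedian point. -/
/-- The point with normalized barycentric coordinates `(x : y : z)`
with respect to the triangle `A B C`. -/
noncomputable def bary (A B C : EuclideanSpace ℝ (Fin 2)) (x y z : ℝ) :
    EuclideanSpace ℝ (Fin 2) :=
  (x + y + z)⁻¹ • (x • A + y • B + z • C)

/-- The triangle center with barycentric coordinates
`(f a b c : f b c a : f c a b)` where `a, b, c` are the side lengths. -/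
noncomputable def tcenter (f : ℝ → ℝ → ℝ → ℝ) (A B C : EuclideanSpace ℝ (Fin 2)) :
    EuclideanSpace ℝ (Fin 2) :=
  bary A B C (f (dist B C) (dist C A) (dist A B))
    (f (dist C A) (dist A B) (dist B C))
    (f (dist A B) (dist B C) (dist C A))

/-- Upper bound for a product of three numbers with sum one. -/
theorem prod_bound (x y z d : ℝ) (hs : x + y + z = 1) (hd : 0 ≤ d)
    (hd2 : d ^ 2 = 1 - 3 * (x * y + y * z + z * x)) :
    x * y * z ≤ (1 - d) ^ 2 * (1 + 2 * d) / 27 := by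
  have key : ∀ u v w : ℝ, u + v + w = 1 → d ^ 2 = 1 - 3 * (u * v + v * w + w * u) →
      0 ≤ 2 * d / 3 - (u - 1 / 3) := by
    intro u v w h1 h2
    have hw : w = 1 - u - v := by linarith
    subst hw
    have : (u - 1 / 3) ^ 2 ≤ (2 * d / 3) ^ 2 := by nlinarith [sq_nonneg (u + 2 * v - 1)]
    have := abs_le_of_sq_le_sq' this (by positivity)
    linarith [this.2]
  have h1 := key x y z hs hd2
  have h2 := key y z x (by linarith) (by linarith)
  have h3 := key z x y (by linarith) (by linarith)
  have h := mul_nonneg (mul_nonneg h1 h2) h3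
  have e : (2 * d / 3 - (x - 1 / 3)) * (2 * d / 3 - (y - 1 / 3)) * (2 * d / 3 - (z - 1 / 3))
      = (1 - d) ^ 2 * (1 + 2 * d) / 27 - x * y * z := by
    have hw : z = 1 - x - y := by linarith
    subst hw
    linear_combination (2 * d / 9 + 1 / 9) * hd2
  linarith

/-- The main inequality in normalized Ravi variables. -/
theorem ravi_ineq (x y z r : ℝ) (hr : 0 ≤ r) (hr3 : r ^ 2 = 3)
    (hx : 0 < x) (hy : 0 < y) (hz : 0 < z) (hs : x + y + z = 1) :
    4 * (1 + r) ^ 2 * (x * y * z) * ((x * y + y * z + z * x) -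
        4 * (x * y + y * z + z * x) ^ 2 + 3 * (x * y * z)) ≤
      ((x * y + y * z + z * x) - 9 * (x * y * z)) * (1 - (x * y + y * z + z * x)) ^ 2 := by
  have ht0 : 0 < x * y + y * z + z * x := by positivity
  have hw0 : 0 < x * y * z := by positivity
  have ht3 : x * y + y * z + z * x ≤ 1 / 3 := by
    have hw : z = 1 - x - y := by linarith
    subst hw
    nlinarith [sq_nonneg (x - y), sq_nonneg (x + y - 2 / 3)]
  have hd2 : (Real.sqrt (1 - 3 * (x * y + y * z + z * x))) ^ 2
      = 1 - 3 * (x * y + y * z + z * x) := Real.sq_sqrt (by linarith)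
  have hd0 := Real.sqrt_nonneg (1 - 3 * (x * y + y * z + z * x))
  have hb := prod_bound x y z _ hs hd0 hd2
  have schur : 4 * (x * y + y * z + z * x) - 1 ≤ 9 * (x * y * z) := by
    have hS : ∀ u v w : ℝ, 0 < u → 0 < v → 0 < w → u ≤ v → v ≤ w →
        0 ≤ u * (u - v) * (u - w) + v * (v - u) * (v - w) + w * (w - u) * (w - v) := by
      intro u v w hu hv hw h1 h2
      have a1 : 0 ≤ u * ((v - u) * (w - u)) :=
        mul_nonneg hu.le (mul_nonneg (by linarith) (by linarith))
      have a2 : 0 ≤ (w - v) * (w * (w - u) - v * (v - u)) := by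
        apply mul_nonneg (by linarith)
        nlinarith
      nlinarith
    have hS' : 0 ≤ x * (x - y) * (x - z) + y * (y - x) * (y - z) + z * (z - x) * (z - y) := by
      rcases le_total x y with a | a <;> rcases le_total y z with b | b <;>
        rcases le_total x z with c | c
      · linarith [hS x y z hx hy hz a b]
      · linarith [hS x y z hx hy hz a b]
      · linarith [hS x z y hx hz hy c b]
      · linarith [hS z x y hz hx hy c a]
      · linarith [hS y x z hy hx hz a c]
      · linarith [hS y z x hy hz hx b c]
      · linarith [hS z y x hz hy hx b a]
      · linarith [hS z y x hz hy hx b a]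
    have hw : z = 1 - x - y := by linarith
    subst hw
    linarith
  generalize Real.sqrt (1 - 3 * (x * y + y * z + z * x)) = d at *
  generalize x * y + y * z + z * x = t at *
  generalize x * y * z = w at *
  obtain rfl : t = (1 - d ^ 2) / 3 := by linarith
  have hd1 : d < 1 := by nlinarith
  obtain ⟨m, hm⟩ : ∃ m, m = (1 - d) ^ 2 * (1 + 2 * d) / 27 := ⟨_, rfl⟩
  rw [← hm] at hb
  have hm1 : (2 * (1 + r) / 3 * ((1 - d) * (1 + 2 * d))) ^ 2 ≤ (2 + d ^ 2) ^ 2 := by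
    apply pow_le_pow_left₀
    · exact mul_nonneg (by positivity) (mul_nonneg (by linarith) (by linarith))
    · have := sq_nonneg ((r - 1) - (2 + r) * d)
      have e : ((r - 1) - (2 + r) * d) ^ 2
          = 3 * (2 + d ^ 2) - 2 * (1 + r) * ((1 - d) * (1 + 2 * d)) := by
        linear_combination (1 - 2 * d + d ^ 2) * hr3
      linarith
  have hmain : 0 ≤ ((1 - d ^ 2) / 3 - 9 * m) * (1 - (1 - d ^ 2) / 3) ^ 2
      - 4 * (1 + r) ^ 2 * m * ((1 - d ^ 2) / 3 - 4 * ((1 - d ^ 2) / 3) ^ 2 + 3 * m) := by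
    have : 0 ≤ 2 * d ^ 2 * (1 - d) / 27 * ((2 + d ^ 2) ^ 2 -
        (2 * (1 + r) / 3 * ((1 - d) * (1 + 2 * d))) ^ 2) :=
      mul_nonneg (div_nonneg (mul_nonneg (by positivity) (by linarith)) (by norm_num))
        (by linarith)
    refine this.trans (le_of_eq ?_)
    rw [hm]; ring
  generalize (1 - d ^ 2) / 3 = t at *
  have hstep : 0 ≤ (m - w) * (9 * (1 - t) ^ 2
      + 4 * (1 + r) ^ 2 * (t - 4 * t ^ 2 + 3 * (m + w))) := by
    apply mul_nonneg (by linarith)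
    have : 0 ≤ t - 4 * t ^ 2 + 3 * (m + w) := by nlinarith
    positivity
  nlinarith

/-- The main inequality in the side lengths. -/
theorem side_ineq (a b c r : ℝ) (hr : 0 ≤ r) (hr3 : r ^ 2 = 3)
    (ha : a < b + c) (hb : b < c + a) (hc : c < a + b) :
    (1 + r) ^ 2 * ((b + c - a) * (c + a - b) * (a + b - c)) *
      (2 * (a ^ 2 + b ^ 2 + c ^ 2) * (a * b + b * c + c * a) - (a ^ 2 + b ^ 2 + c ^ 2) ^ 2
        - 3 * (a * b * c) * (a + b + c)) ≤
    (a * b * c - (b + c - a) * (c + a - b) * (a + b - c)) * (a ^ 2 + b ^ 2 + c ^ 2) ^ 2 := by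
  have hp : 0 < a + b + c := by linarith
  obtain ⟨x, hx⟩ : ∃ x, x = (b + c - a) / (a + b + c) := ⟨_, rfl⟩
  obtain ⟨y, hy⟩ : ∃ x, x = (c + a - b) / (a + b + c) := ⟨_, rfl⟩
  obtain ⟨z, hz⟩ : ∃ x, x = (a + b - c) / (a + b + c) := ⟨_, rfl⟩
  have h := ravi_ineq x y z r hr hr3 (by rw [hx]; exact div_pos (by linarith) hp)
    (by rw [hy]; exact div_pos (by linarith) hp)
    (by rw [hz]; exact div_pos (by linarith) hp) (by rw [hx, hy, hz]; field_simp; ring)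
  have hs : x + y + z = 1 := by rw [hx, hy, hz]; field_simp; ring
  obtain ⟨s, hs'⟩ : ∃ s, s = (a + b + c) / 2 := ⟨_, rfl⟩
  have hs0 : 0 < s := by rw [hs']; linarith
  have ea : a = s * (1 - x) := by rw [hx, hs']; field_simp; ring
  have eb : b = s * (1 - y) := by rw [hy, hs']; field_simp; ring
  have ec : c = s * (1 - z) := by rw [hz, hs']; field_simp; ring
  clear hx hy hz hs'
  subst ea eb ec
  have hw : z = 1 - x - y := by linarith
  subst hw
  have h2 := mul_le_mul_of_nonneg_left h (show 0 ≤ 4 * s ^ 7 by positivity)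
  linarith

theorem norm_formula (A B C : EuclideanSpace ℝ (Fin 2)) (u v w : ℝ) (h : u + v + w = 0) :
    ‖u • A + v • B + w • C‖ ^ 2 =
      -(dist B C ^ 2 * (v * w) + dist C A ^ 2 * (w * u) + dist A B ^ 2 * (u * v)) := by
  obtain rfl : w = -u - v := by linarith
  simp only [EuclideanSpace.dist_eq, EuclideanSpace.norm_eq]
  rw [Real.sq_sqrt (by positivity), Real.sq_sqrt (by positivity), Real.sq_sqrt (by positivity),
    Real.sq_sqrt (by positivity)]
  simp [Fin.sum_univ_two, Real.dist_eq]
  ring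

theorem bary_dist (A B C : EuclideanSpace ℝ (Fin 2)) (x y z x' y' z' : ℝ)
    (h : x + y + z ≠ 0) (h' : x' + y' + z' ≠ 0) :
    dist (bary A B C x y z) (bary A B C x' y' z') ^ 2 =
      -(dist B C ^ 2 * ((y / (x + y + z) - y' / (x' + y' + z')) *
          (z / (x + y + z) - z' / (x' + y' + z')))
        + dist C A ^ 2 * ((z / (x + y + z) - z' / (x' + y' + z')) *
          (x / (x + y + z) - x' / (x' + y' + z')))
        + dist A B ^ 2 * ((x / (x + y + z) - x' / (x' + y' + z')) *
          (y / (x + y + z) - y' / (x' + y' + z')))) := by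
  rw [← norm_formula, dist_eq_norm]
  · congr 2
    unfold bary
    module
  · field_simp
    ring

theorem strict_tri (A B C : EuclideanSpace ℝ (Fin 2)) (h : ¬ Collinear ℝ {A, B, C}) :
    dist A C < dist A B + dist B C := by
  rcases (dist_triangle A B C).lt_or_eq with h1 | h1
  · exact h1
  · exact absurd (dist_add_dist_eq_iff.1 h1.symm).collinear h

theorem le_of_sq_le_sq_aux (x y : ℝ) (hy : 0 ≤ y) (h : x ^ 2 ≤ y ^ 2) : x ≤ y :=
  (abs_le_of_sq_le_sq' h hy).2

theorem circum_sum (a b c : ℝ) :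
    a ^ 2 * (a ^ 2 - b ^ 2 - c ^ 2) + b ^ 2 * (b ^ 2 - c ^ 2 - a ^ 2)
      + c ^ 2 * (c ^ 2 - a ^ 2 - b ^ 2) =
    -((a + b + c) * ((b + c - a) * (c + a - b) * (a + b - c))) := by ring

theorem circum_ne (a b c : ℝ) (ha : a < b + c) (hb : b < c + a) (hc : c < a + b) :
    a ^ 2 * (a ^ 2 - b ^ 2 - c ^ 2) + b ^ 2 * (b ^ 2 - c ^ 2 - a ^ 2)
      + c ^ 2 * (c ^ 2 - a ^ 2 - b ^ 2) ≠ 0 := by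
  rw [circum_sum]
  have h1 : 0 < b + c - a := by linarith
  have h2 : 0 < c + a - b := by linarith
  have h3 : 0 < a + b - c := by linarith
  have h4 : 0 < a + b + c := by linarith
  exact neg_ne_zero.2 (by positivity)

theorem circum_formula (a b c : ℝ) (ha : a < b + c) (hb : b < c + a) (hc : c < a + b) :
    -(a ^ 2 * ((b / (a + b + c) - b ^ 2 * (b ^ 2 - c ^ 2 - a ^ 2) /
        (a ^ 2 * (a ^ 2 - b ^ 2 - c ^ 2) + b ^ 2 * (b ^ 2 - c ^ 2 - a ^ 2)
          + c ^ 2 * (c ^ 2 - a ^ 2 - b ^ 2))) *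
        (c / (a + b + c) - c ^ 2 * (c ^ 2 - a ^ 2 - b ^ 2) /
        (a ^ 2 * (a ^ 2 - b ^ 2 - c ^ 2) + b ^ 2 * (b ^ 2 - c ^ 2 - a ^ 2)
          + c ^ 2 * (c ^ 2 - a ^ 2 - b ^ 2))))
      + b ^ 2 * ((c / (a + b + c) - c ^ 2 * (c ^ 2 - a ^ 2 - b ^ 2) /
        (a ^ 2 * (a ^ 2 - b ^ 2 - c ^ 2) + b ^ 2 * (b ^ 2 - c ^ 2 - a ^ 2)
          + c ^ 2 * (c ^ 2 - a ^ 2 - b ^ 2))) *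
        (a / (a + b + c) - a ^ 2 * (a ^ 2 - b ^ 2 - c ^ 2) /
        (a ^ 2 * (a ^ 2 - b ^ 2 - c ^ 2) + b ^ 2 * (b ^ 2 - c ^ 2 - a ^ 2)
          + c ^ 2 * (c ^ 2 - a ^ 2 - b ^ 2))))
      + c ^ 2 * ((a / (a + b + c) - a ^ 2 * (a ^ 2 - b ^ 2 - c ^ 2) /
        (a ^ 2 * (a ^ 2 - b ^ 2 - c ^ 2) + b ^ 2 * (b ^ 2 - c ^ 2 - a ^ 2)
          + c ^ 2 * (c ^ 2 - a ^ 2 - b ^ 2))) *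
        (b / (a + b + c) - b ^ 2 * (b ^ 2 - c ^ 2 - a ^ 2) /
        (a ^ 2 * (a ^ 2 - b ^ 2 - c ^ 2) + b ^ 2 * (b ^ 2 - c ^ 2 - a ^ 2)
          + c ^ 2 * (c ^ 2 - a ^ 2 - b ^ 2))))) =
    a * b * c * (a * b * c - (b + c - a) * (c + a - b) * (a + b - c)) /
      ((a + b + c) * ((b + c - a) * (c + a - b) * (a + b - c))) := by
  rw [circum_sum]
  have h1 : b + c - a ≠ 0 := by intro h; linarith
  have h2 : c + a - b ≠ 0 := by intro h; linarith
  have h3 : a + b - c ≠ 0 := by intro h; linarith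
  have h4 : a + b + c ≠ 0 := by intro h; linarith
  field_simp
  ring

theorem symm_formula (a b c : ℝ) (hp : a + b + c ≠ 0) (hq : a ^ 2 + b ^ 2 + c ^ 2 ≠ 0) :
    -(a ^ 2 * ((b / (a + b + c) - b ^ 2 / (a ^ 2 + b ^ 2 + c ^ 2)) *
        (c / (a + b + c) - c ^ 2 / (a ^ 2 + b ^ 2 + c ^ 2)))
      + b ^ 2 * ((c / (a + b + c) - c ^ 2 / (a ^ 2 + b ^ 2 + c ^ 2)) *
        (a / (a + b + c) - a ^ 2 / (a ^ 2 + b ^ 2 + c ^ 2)))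
      + c ^ 2 * ((a / (a + b + c) - a ^ 2 / (a ^ 2 + b ^ 2 + c ^ 2)) *
        (b / (a + b + c) - b ^ 2 / (a ^ 2 + b ^ 2 + c ^ 2)))) =
    a * b * c * (2 * (a ^ 2 + b ^ 2 + c ^ 2) * (a * b + b * c + c * a)
        - (a ^ 2 + b ^ 2 + c ^ 2) ^ 2 - 3 * (a * b * c) * (a + b + c)) /
      ((a + b + c) * (a ^ 2 + b ^ 2 + c ^ 2) ^ 2) := by
  field_simp
  ring

theorem stmt_8 (A B C : EuclideanSpace ℝ (Fin 2))
    (h : AffineIndependent ℝ ![A, B, C]) :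
    dist (tcenter (fun a b c => a) A B C) (tcenter (fun a b c => a^2*(a^2 - b^2 - c^2)) A B C) ≥ (1 + Real.sqrt 3) * dist (tcenter (fun a b c => a) A B C) (tcenter (fun a b c => a^2) A B C) := by
  rw [affineIndependent_iff_not_collinear_set] at h
  have hB : dist C A < dist A B + dist B C := by
    rw [dist_comm C A]; exact strict_tri A B C h
  have hC : dist A B < dist B C + dist C A := by
    have := strict_tri B C A (by
      rwa [show ({B, C, A} : Set (EuclideanSpace ℝ (Fin 2))) = {A, B, C} by
        ext; simp; tauto])
    rwa [dist_comm B A] at this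
  have hA : dist B C < dist C A + dist A B := by
    have := strict_tri C A B (by
      rwa [show ({C, A, B} : Set (EuclideanSpace ℝ (Fin 2))) = {A, B, C} by
        ext; simp; tauto])
    rwa [dist_comm C B] at this
  have hr := Real.sqrt_nonneg 3
  have hr3 : Real.sqrt 3 ^ 2 = 3 := Real.sq_sqrt (by norm_num)
  have hI := side_ineq _ _ _ _ hr hr3 hA hB hC
  refine le_of_sq_le_sq_aux _ _ dist_nonneg ?_
  have hp : 0 < dist B C + dist C A + dist A B := by linarith
  have ha : 0 < dist B C := by linarith
  have hb : 0 < dist C A := by linarith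
  have hc : 0 < dist A B := by linarith
  unfold tcenter
  rw [mul_pow, bary_dist _ _ _ _ _ _ _ _ _ hp.ne' (by positivity),
    bary_dist _ _ _ _ _ _ _ _ _ hp.ne' (circum_ne _ _ _ hA hB hC)]
  generalize dist B C = a at *
  generalize dist C A = b at *
  generalize dist A B = c at *
  rw [circum_formula a b c hA hB hC, symm_formula a b c hp.ne' (by positivity)]
  have hP : 0 < (b + c - a) * (c + a - b) * (a + b - c) :=
    mul_pos (mul_pos (by linarith) (by linarith)) (by linarith)
  have hq : 0 < a ^ 2 + b ^ 2 + c ^ 2 := by positivity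
  rw [mul_div_assoc', div_le_div_iff₀ (by positivity) (by positivity)]
  have := mul_le_mul_of_nonneg_left hI (show 0 ≤ a * b * c * (a + b + c) by positivity)
  linarith
end

section
/- In any nondegenerate triangle, the distance from the centroid X2 to the symmedian point X6 and the distance from X2 to the Nagel point X8 satisfy (1/2)·dist(X2, X8) ≤ dist(X2, X6) ≤ ((4 + 3√2)/8)·dist(X2, X8). -/
/-- Squared-distance numerator for the Nagel point. -/
noncomputable def gN (a b c : ℝ) : ℝ :=
  (a + b + c) * (5 * (a*b + b*c + c*a) - (a+b+c)^2) - 18 * a * b * c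

/-- Squared-distance numerator for the symmedian point. -/
noncomputable def nS (a b c : ℝ) : ℝ :=
  6 * (a^2+b^2+c^2) * (a^2*b^2 + b^2*c^2 + c^2*a^2) - (a^2+b^2+c^2)^3 - 27 * (a^2*b^2*c^2)

lemma gN_rot (a b c : ℝ) : gN a b c = gN b c a := by unfold gN; ring
lemma gN_swap (a b c : ℝ) : gN a b c = gN b a c := by unfold gN; ring
lemma nS_rot (a b c : ℝ) : nS a b c = nS b c a := by unfold nS; ring
lemma nS_swap (a b c : ℝ) : nS a b c = nS b a c := by unfold nS; ring

lemma lower_aux (x u v : ℝ) (hx : 0 ≤ x) (hu : 0 ≤ u) (hv : 0 ≤ v) :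
    0 ≤ (2*(3*x+2*u+v)) * nS (2*x+2*u+v) (2*x+u+v) (2*x+u)
      - gN (2*x+2*u+v) (2*x+u+v) (2*x+u) * ((2*x+2*u+v)^2 + (2*x+u+v)^2 + (2*x+u)^2)^2 := by
  have h : (2*(3*x+2*u+v)) * nS (2*x+2*u+v) (2*x+u+v) (2*x+u)
      - gN (2*x+2*u+v) (2*x+u+v) (2*x+u) * ((2*x+2*u+v)^2 + (2*x+u+v)^2 + (2*x+u)^2)^2
      = 24*u^1*v^6 + 162*u^2*v^5 + 408*u^3*v^4 + 450*u^4*v^3 + 180*u^5*v^2 + 48*x^1*v^6 + 552*x^1*u^1*v^5 + 2046*x^1*u^2*v^4 + 3204*x^1*u^3*v^3 + 2142*x^1*u^4*v^2 + 648*x^1*u^5*v^1 + 216*x^1*u^6 + 408*x^2*v^5 + 3000*x^2*u^1*v^4 + 7176*x^2*u^2*v^3 + 6864*x^2*u^3*v^2 + 3120*x^2*u^4*v^1 + 1248*x^2*u^5 + 1320*x^3*v^4 + 6288*x^3*u^1*v^3 + 8952*x^3*u^2*v^2 + 5328*x^3*u^3*v^1 + 2664*x^3*u^4 + 1824*x^4*v^3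 + 4896*x^4*u^1*v^2 + 3744*x^4*u^2*v^1 + 2496*x^4*u^3 + 864*x^5*v^2 + 864*x^5*u^1*v^1 + 864*x^5*u^2 := by
    unfold nS gN; ring
  rw [h]; positivity

/-- Both polynomial inequalities. -/
def Good (a b c : ℝ) : Prop :=
  gN a b c * (a^2+b^2+c^2)^2 ≤ (a+b+c) * nS a b c ∧
  (a+b+c) * nS a b c ≤ (17 + 12 * Real.sqrt 2)/8 * (gN a b c * (a^2+b^2+c^2)^2)

lemma Good_rot {a b c : ℝ} (h : Good a b c) : Good b c a := by
  unfold Good at *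
  rw [← gN_rot, ← nS_rot, show b+c+a = a+b+c by ring, show b^2+c^2+a^2 = a^2+b^2+c^2 by ring]
  exact h

lemma Good_swap {a b c : ℝ} (h : Good a b c) : Good b a c := by
  unfold Good at *
  rw [← gN_swap, ← nS_swap, show b+a+c = a+b+c by ring, show b^2+a^2+c^2 = a^2+b^2+c^2 by ring]
  exact h

lemma upper_aux (e f d w : ℝ) (he : 0 ≤ e) (hf : 0 ≤ f) (hw : 0 ≤ w) (hw2 : w^2 = 2) :
    0 ≤ (17 + 12 * w)/8 * (gN (e+f-d) (e+f+d) (2*e+f) *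
          ((e+f-d)^2 + (e+f+d)^2 + (2*e+f)^2)^2)
      - (4*e+3*f) * nS (e+f-d) (e+f+d) (2*e+f) := by
  have hw3 : 1.41 ≤ w := by nlinarith
  set l := (17 + 12 * w)/8 with hl
  have hl4 : 4.24 ≤ l := by rw [hl]; linarith
  set m := e + f with hm
  set c := 2*e+f with hc
  set E := 2*m^2+c^2 with hE
  have hm0 : 0 ≤ m := by positivity
  have hc0 : 0 ≤ c := by positivity
  have hE0 : 0 ≤ E := by positivity
  have key : l * (gN (m-d) (m+d) c * ((m-d)^2 + (m+d)^2 + c^2)^2) - (4*e+3*f) * nS (m-d) (m+d) c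
     = e^2 * f * (l * E^2 - (m+c)^2*(2*m+c)^2)
       + d^2 * (l * ((16*e+3*f)*E^2+4*E*e^2*f) - (2*m+c)*(6*c^4+66*c^2*m^2-36*m^4))
       + d^4 * (l * (4*E*(16*e+3*f)+4*e^2*f) + (2*m+c)*(9*c^2+36*m^2))
       + d^6 * (4*l*(16*e+3*f) - 4*(4*e+3*f)) := by
    simp only [hE, hm, hc]; unfold nS gN; ring
  rw [key]
  have h0 : 0 ≤ l * E^2 - (m+c)^2*(2*m+c)^2 := by
    have h1 : l * E^2 = ((1 + 3*w/4)*E)^2 := by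
      rw [hl]; linear_combination (-(9/16)*E^2) * hw2
    have h2 : (m+c)*(2*m+c) ≤ (1 + 3*w/4)*E := by
      have : (1 + 3*w/4)*E - (m+c)*(2*m+c) = 3*w/4 * (c - w*m)^2 := by
        simp only [hE]; linear_combination (3/2*m*c - 3/4*w*m^2) * hw2
      nlinarith [mul_nonneg hw (sq_nonneg (c-w*m))]
    have h3 : ((m+c)*(2*m+c))^2 ≤ ((1 + 3*w/4)*E)^2 := pow_le_pow_left₀ (by positivity) h2 2
    rw [h1]; linarith [mul_pow (m+c) (2*m+c) 2]
  have h1 : 0 ≤ l * ((16*e+3*f)*E^2+4*E*e^2*f) - (2*m+c)*(6*c^4+66*c^2*m^2-36*m^4) := by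
    have h2 : 4.24 * ((16*e+3*f)*E^2+4*E*e^2*f) ≤ l * ((16*e+3*f)*E^2+4*E*e^2*f) :=
      mul_le_mul_of_nonneg_right hl4 (by positivity)
    have h3 : 4.24 * ((16*e+3*f)*E^2+4*E*e^2*f) - (2*m+c)*(6*c^4+66*c^2*m^2-36*m^4)
      = 28656/25*e^5 + 68508/25*e^4*f + 12384/5*e^3*f^2+5106/5*e^2*f^3+4428/25*e*f^4
        + 162/25*f^5 := by
      simp only [hE, hm, hc]; ring
    have h4 : 0 ≤ 28656/25*e^5 + 68508/25*e^4*f + 12384/5*e^3*f^2+5106/5*e^2*f^3+4428/25*e*f^4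
        + 162/25*f^5 := by positivity
    linarith
  have hl0 : 0 ≤ l := by linarith
  have h2 : 0 ≤ l * (4*E*(16*e+3*f)+4*e^2*f) + (2*m+c)*(9*c^2+36*m^2) := by positivity
  have h3 : 0 ≤ 4*l*(16*e+3*f) - 4*(4*e+3*f) := by
    have h4 : 0 ≤ l - 1 := by linarith
    have h5 : 4*l*(16*e+3*f) - 4*(4*e+3*f) = 4*(l-1)*(16*e+3*f) + 48*e := by ring
    rw [h5]; positivity
  clear_value l E m c
  positivity

lemma Good_sorted (a b c : ℝ) (h1 : a ≤ b) (h2 : b ≤ c) (h3 : c ≤ a + b) : Good a b c := by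
  constructor
  · have := lower_aux ((a+b-c)/2) (c-b) (b-a) (by linarith) (by linarith) (by linarith)
    rw [show 2*((a+b-c)/2)+2*(c-b)+(b-a) = c by ring,
      show 2*((a+b-c)/2)+(c-b)+(b-a) = b by ring, show 2*((a+b-c)/2)+(c-b) = a by ring,
      show 2*(3*((a+b-c)/2)+2*(c-b)+(b-a)) = a+b+c by ring,
      show c^2+b^2+a^2 = a^2+b^2+c^2 by ring,
      show gN c b a = gN a b c by unfold gN; ring, show nS c b a = nS a b c by unfold nS; ring] at this
    linarith
  · have := upper_aux (c-(a+b)/2) (a+b-c) ((b-a)/2) (Real.sqrt 2) (by linarith) (by linarith)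
      (Real.sqrt_nonneg 2) (Real.sq_sqrt (by norm_num))
    rw [show c-(a+b)/2+(a+b-c)-(b-a)/2 = a by ring, show c-(a+b)/2+(a+b-c)+(b-a)/2 = b by ring,
      show 2*(c-(a+b)/2)+(a+b-c) = c by ring, show 4*(c-(a+b)/2)+3*(a+b-c) = a+b+c by ring] at this
    linarith

lemma Good_all (a b c : ℝ) (h1 : a ≤ b + c) (h2 : b ≤ c + a) (h3 : c ≤ a + b) : Good a b c := by
  rcases le_total a b with hab | hab <;> rcases le_total b c with hbc | hbc <;>
    rcases le_total a c with hac | hac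
  · exact Good_sorted a b c hab hbc h3
  · exact Good_sorted a b c hab hbc h3
  · exact Good_swap (Good_rot (Good_rot (Good_sorted a c b hac hbc (by linarith))))
  · exact Good_rot (Good_sorted c a b hac hab (by linarith))
  · exact Good_swap (Good_sorted b a c hab hac (by linarith))
  · exact Good_rot (Good_rot (Good_sorted b c a hbc hac (by linarith)))
  · exact Good_swap (Good_rot (Good_sorted c b a hbc hab (by linarith)))
  · exact Good_swap (Good_rot (Good_sorted c b a hbc hab (by linarith)))

lemma dist_sq_coord (P Q : EuclideanSpace ℝ (Fin 2)) :
    dist P Q ^ 2 = (P 0 - Q 0)^2 + (P 1 - Q 1)^2 := by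
  rw [EuclideanSpace.dist_eq, Real.sq_sqrt (by positivity), Fin.sum_univ_two,
    Real.dist_eq, Real.dist_eq, sq_abs, sq_abs]

lemma dist_bary_sq (A B C : EuclideanSpace ℝ (Fin 2)) (x y z : ℝ) (h : x + y + z ≠ 0) :
    dist (bary A B C 1 1 1) (bary A B C x y z) ^ 2 * (9 * (x+y+z)^2) =
      -(dist B C ^ 2 * (3*y-(x+y+z)) * (3*z-(x+y+z)) + dist C A ^ 2 * (3*z-(x+y+z)) * (3*x-(x+y+z))
        + dist A B ^ 2 * (3*x-(x+y+z)) * (3*y-(x+y+z))) := by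
  simp only [dist_sq_coord, bary, PiLp.smul_apply, PiLp.add_apply, smul_eq_mul]
  field_simp
  ring

theorem stmt_11 (A B C : EuclideanSpace ℝ (Fin 2))
    (h : AffineIndependent ℝ ![A, B, C]) :
    (1/2) * dist (tcenter (fun a b c => (1:Real)) A B C) (tcenter (fun a b c => b + c - a) A B C) ≤ dist (tcenter (fun a b c => (1:Real)) A B C) (tcenter (fun a b c => a^2) A B C) ∧
      dist (tcenter (fun a b c => (1:Real)) A B C) (tcenter (fun a b c => a^2) A B C) ≤ ((4 + 3 * Real.sqrt 2)/8) * dist (tcenter (fun a b c => (1:Real)) A B C) (tcenter (fun a b c => b + c - a) A B C) := by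
  have inj := h.injective
  have hBC : 0 < dist B C := by
    rw [dist_pos]; intro e
    have := @inj 1 2 (by simpa using e)
    simp at this
  have t1 : dist B C ≤ dist C A + dist A B := by
    have := dist_triangle B A C
    rw [dist_comm B A, dist_comm A C] at this; linarith
  have t2 : dist C A ≤ dist A B + dist B C := by
    have := dist_triangle C B A
    rw [dist_comm C B, dist_comm B A] at this; linarith
  have t3 : dist A B ≤ dist B C + dist C A := by
    have := dist_triangle A C B
    rw [dist_comm A C, dist_comm C B] at this; linarith
  have hG := Good_all (dist B C) (dist C A) (dist A B) (by linarith) (by linarith) (by linarith)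
  simp only [tcenter]
  have e8 := dist_bary_sq A B C (dist C A + dist A B - dist B C) (dist A B + dist B C - dist C A)
    (dist B C + dist C A - dist A B) (by
      have := dist_nonneg (x := C) (y := A); have := dist_nonneg (x := A) (y := B); linarith)
  have e6 := dist_bary_sq A B C (dist B C ^ 2) (dist C A ^ 2) (dist A B ^ 2) (by positivity)
  have hs : 0 < dist B C + dist C A + dist A B := by positivity
  have hQ : 0 < dist B C ^ 2 + dist C A ^ 2 + dist A B ^ 2 := by positivity
  have p8 : 0 ≤ dist (bary A B C 1 1 1) (bary A B C (dist C A + dist A B - dist B C)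
    (dist A B + dist B C - dist C A) (dist B C + dist C A - dist A B)) := dist_nonneg
  have p6 : 0 ≤ dist (bary A B C 1 1 1) (bary A B C (dist B C ^ 2) (dist C A ^ 2) (dist A B ^ 2)) :=
    dist_nonneg
  generalize dist (bary A B C 1 1 1) (bary A B C (dist C A + dist A B - dist B C)
    (dist A B + dist B C - dist C A) (dist B C + dist C A - dist A B)) = D8 at *
  generalize dist (bary A B C 1 1 1) (bary A B C (dist B C ^ 2) (dist C A ^ 2) (dist A B ^ 2)) = D6 at *
  generalize dist B C = a at *
  generalize dist C A = b at *
  generalize dist A B = c at *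
  have f8 : D8^2 = 4 * gN a b c / (9 * (a+b+c)) := by
    rw [eq_div_iff (by positivity)]
    apply mul_right_cancel₀ hs.ne'
    unfold gN
    linear_combination e8
  have f6 : D6^2 = nS a b c / (9 * (a^2+b^2+c^2)^2) := by
    rw [eq_div_iff (by positivity)]
    unfold nS
    linear_combination e6
  obtain ⟨g1, g2⟩ := hG
  have w2 : Real.sqrt 2 ^ 2 = 2 := Real.sq_sqrt (by norm_num)
  have w0 := Real.sqrt_nonneg 2
  constructor
  · rw [← pow_le_pow_iff_left₀ (by positivity) p6 two_ne_zero, mul_pow, f8, f6,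
      show (1/2:ℝ)^2 * (4 * gN a b c / (9 * (a+b+c))) = gN a b c / (9 * (a+b+c)) by ring,
      div_le_div_iff₀ (by positivity) (by positivity)]
    linarith
  · rw [← pow_le_pow_iff_left₀ p6 (by positivity) two_ne_zero, mul_pow, f8, f6,
      show ((4 + 3 * Real.sqrt 2)/8)^2 * (4 * gN a b c / (9 * (a+b+c)))
        = ((17 + 12 * Real.sqrt 2)/8 * gN a b c) / (9 * (a+b+c)) by
        rw [show ((4 + 3 * Real.sqrt 2)/8)^2 = (17 + 12 * Real.sqrt 2)/32 by
          linear_combination (9/64) * w2]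
        ring,
      div_le_div_iff₀ (by positivity) (by positivity)]
    linarith
end

section
/- In any nondegenerate triangle, the distance from the symmedian point X6 to the incenter X1 satisfies dist(X6, X1) ≤ ((2√2 − 1)/7)·dist(X6, X8), where X8 is the Nagel point. -/
/-- `abc` times this is the squared norm of the scaled vector `X6 - X1`. -/
noncomputable def pFive (a b c : ℝ) : ℝ :=
  -(a * (b * (a + b + c) - (a^2 + b^2 + c^2)) * (c * (a + b + c) - (a^2 + b^2 + c^2))
    + b * (c * (a + b + c) - (a^2 + b^2 + c^2)) * (a * (a + b + c) - (a^2 + b^2 + c^2))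
    + c * (a * (a + b + c) - (a^2 + b^2 + c^2)) * (b * (a + b + c) - (a^2 + b^2 + c^2)))

/-- Minus twice the scaled inner product of `X6 - X1` and `X8 - X1`. -/
noncomputable def qSix (a b c : ℝ) : ℝ :=
  a^2 * (b * (b * (a + b + c) - (a^2 + b^2 + c^2)) * (a + b - 2 * c)
      + c * (c * (a + b + c) - (a^2 + b^2 + c^2)) * (c + a - 2 * b))
  + b^2 * (c * (c * (a + b + c) - (a^2 + b^2 + c^2)) * (b + c - 2 * a)
      + a * (a * (a + b + c) - (a^2 + b^2 + c^2)) * (a + b - 2 * c))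
  + c^2 * (a * (a * (a + b + c) - (a^2 + b^2 + c^2)) * (c + a - 2 * b)
      + b * (b * (a + b + c) - (a^2 + b^2 + c^2)) * (b + c - 2 * a))

/-- The scaled squared norm of `X8 - X1`. -/
noncomputable def wFour (a b c : ℝ) : ℝ :=
  -(a^2 * (c + a - 2 * b) * (a + b - 2 * c) + b^2 * (a + b - 2 * c) * (b + c - 2 * a)
    + c^2 * (b + c - 2 * a) * (c + a - 2 * b))

lemma core_sorted (a b c : ℝ) (ha : 0 < a) (hab : a ≤ b) (hbc : b ≤ c) (h : c ≤ a + b) :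
    (8 + 4 * √2) * (a * b * c * pFive a b c) ≤
      qSix a b c * (a^2 + b^2 + c^2) + wFour a b c * (a^2 + b^2 + c^2)^2 := by
  have hb : 0 < b := by linarith
  have hc : 0 < c := by linarith
  have key : 0 ≤ qSix a b c ∧ 0 ≤ wFour a b c ∧
      0 ≤ qSix a b c * (a + b) - 4 * a * b * pFive a b c ∧
      0 ≤ c * wFour a b c - pFive a b c := by
    obtain ⟨y, hy⟩ : ∃ y, y = b - a := ⟨_, rfl⟩
    obtain ⟨z, hz⟩ : ∃ z, z = c - b := ⟨_, rfl⟩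
    obtain ⟨x, hx⟩ : ∃ x, x = a + b - c := ⟨_, rfl⟩
    have hx0 : 0 ≤ x := by linarith
    have hy0 : 0 ≤ y := by linarith
    have hz0 : 0 ≤ z := by linarith
    have e1 : a = x + z := by linarith
    have e2 : b = x + y + z := by linarith
    have e3 : c = x + y + 2 * z := by linarith
    clear hx hy hz
    subst e1 e2 e3
    unfold qSix wFour pFive
    refine ⟨?_, ?_, ?_, ?_⟩ <;> (ring_nf; positivity)
  obtain ⟨hQ, hW, hA, hC⟩ := key
  have s2 : √2 ^ 2 = 2 := Real.sq_sqrt (by norm_num)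
  have s0 : 0 ≤ √2 := Real.sqrt_nonneg 2
  have hS : √2 * (c * (a + b)) ≤ a^2 + b^2 + c^2 := by
    nlinarith [sq_nonneg (√2 * c - (a + b)), sq_nonneg (a - b)]
  have hS2 : 8 * (a * b * c) * c ≤ (a^2 + b^2 + c^2)^2 := by
    have h1 : (√2 * (c * (a + b)))^2 ≤ (a^2 + b^2 + c^2)^2 :=
      pow_le_pow_left₀ (by positivity) hS 2
    have h2 : (√2 * (c * (a + b)))^2 = 2 * c^2 * (a+b)^2 := by
      rw [mul_pow, s2]; ring
    have h3 : 0 ≤ 2 * c^2 * (a-b)^2 := by positivity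
    nlinarith
  have i1 := mul_le_mul_of_nonneg_left hS hQ
  have i2 := mul_le_mul_of_nonneg_left hS2 hW
  have i3 : 0 ≤ √2 * c * (qSix a b c * (a + b) - 4 * a * b * pFive a b c) := by positivity
  have i4 : 0 ≤ 8 * (a * b * c) * (c * wFour a b c - pFive a b c) := by positivity
  linarith

/-- The symmetric polynomial inequality. -/
def CoreIneq (a b c : ℝ) : Prop :=
    (8 + 4 * √2) * (a * b * c * pFive a b c) ≤
      qSix a b c * (a^2 + b^2 + c^2) + wFour a b c * (a^2 + b^2 + c^2)^2

lemma core_swap (a b c : ℝ) (h : CoreIneq a b c) : CoreIneq b a c := by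
  unfold CoreIneq pFive qSix wFour at *
  linarith

lemma core_rot (a b c : ℝ) (h : CoreIneq a b c) : CoreIneq b c a := by
  unfold CoreIneq pFive qSix wFour at *
  linarith

lemma core (a b c : ℝ) (ha : 0 < a) (hb : 0 < b) (hc : 0 < c)
    (h1 : a ≤ b + c) (h2 : b ≤ c + a) (h3 : c ≤ a + b) : CoreIneq a b c := by
  have srt : ∀ a b c : ℝ, 0 < a → a ≤ b → b ≤ c → c ≤ a + b → CoreIneq a b c := core_sorted
  rcases le_total a b with hab | hab <;> rcases le_total b c with hbc | hbc <;>
    rcases le_total a c with hac | hac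
  · exact srt a b c ha hab hbc (by linarith)
  · exact srt a b c ha hab hbc (by linarith)
  · exact core_rot _ _ _ (core_swap _ _ _ (srt a c b ha hac hbc (by linarith)))
  · exact core_rot _ _ _ (srt c a b hc hac hab (by linarith))
  · exact core_swap _ _ _ (srt b a c hb hab hac (by linarith))
  · exact core_rot _ _ _ (core_rot _ _ _ (srt b c a hb hbc hac (by linarith)))
  · exact core_swap _ _ _ (core_rot _ _ _ (srt c b a hc hbc hab (by linarith)))
  · exact core_swap _ _ _ (core_rot _ _ _ (srt c b a hc hbc hab (by linarith)))

lemma bary_dist_sq (A B C : EuclideanSpace ℝ (Fin 2)) (x y z x' y' z' : ℝ)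
    (hs : x + y + z ≠ 0) (hs' : x' + y' + z' ≠ 0) :
    dist (bary A B C x y z) (bary A B C x' y' z') ^ 2 =
      -(dist B C ^ 2 * (y * (x' + y' + z') - y' * (x + y + z)) *
            (z * (x' + y' + z') - z' * (x + y + z))
        + dist C A ^ 2 * (z * (x' + y' + z') - z' * (x + y + z)) *
            (x * (x' + y' + z') - x' * (x + y + z))
        + dist A B ^ 2 * (x * (x' + y' + z') - x' * (x + y + z)) *
            (y * (x' + y' + z') - y' * (x + y + z)))
        / ((x + y + z) * (x' + y' + z')) ^ 2 := by
  simp only [EuclideanSpace.dist_eq, bary, Fin.sum_univ_two, Real.dist_eq, sq_abs]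
  rw [Real.sq_sqrt (by positivity), Real.sq_sqrt (by positivity), Real.sq_sqrt (by positivity),
    Real.sq_sqrt (by positivity)]
  simp only [PiLp.smul_apply, PiLp.add_apply, smul_eq_mul]
  field_simp
  ring

theorem stmt_16 (A B C : EuclideanSpace ℝ (Fin 2))
    (h : AffineIndependent ℝ ![A, B, C]) :
    dist (tcenter (fun a b c => a^2) A B C) (tcenter (fun a b c => a) A B C) ≤ ((2 * Real.sqrt 2 - 1)/7) * dist (tcenter (fun a b c => a^2) A B C) (tcenter (fun a b c => b + c - a) A B C) := by
  have hAB : 0 < dist A B := dist_pos.2 fun e => by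
    have := h.injective (a₁ := 0) (a₂ := 1) (by simpa using e)
    simp at this
  have hBC : 0 < dist B C := dist_pos.2 fun e => by
    have := h.injective (a₁ := 1) (a₂ := 2) (by simpa using e)
    simp at this
  have hCA : 0 < dist C A := dist_pos.2 fun e => by
    have := h.injective (a₁ := 2) (a₂ := 0) (by simpa using e)
    simp at this
  have hcore := core (dist B C) (dist C A) (dist A B) hBC hCA hAB
    (by linarith [dist_triangle B A C, dist_comm B A, dist_comm A C])
    (by linarith [dist_triangle C B A, dist_comm C B, dist_comm B A])
    (by linarith [dist_triangle A C B, dist_comm A C, dist_comm C B])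
  unfold tcenter
  set a := dist B C with ha
  set b := dist C A with hb
  set c := dist A B with hc
  have hS : a^2 + b^2 + c^2 ≠ 0 := by positivity
  have hp : a + b + c ≠ 0 := by positivity
  have hn : (b + c - a) + (c + a - b) + (a + b - c) = a + b + c := by ring
  have d1 := bary_dist_sq A B C (a^2) (b^2) (c^2) a b c hS hp
  have d2 := bary_dist_sq A B C (a^2) (b^2) (c^2) (b + c - a) (c + a - b) (a + b - c) hS
    (by rw [hn]; exact hp)
  rw [hn, ← ha, ← hb, ← hc] at d2
  rw [← ha, ← hb, ← hc] at d1
  have s2 : √2 ^ 2 = 2 := Real.sq_sqrt (by norm_num)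
  have s1 : 1 ≤ √2 := Real.one_le_sqrt.2 (by norm_num)
  have hk : 0 ≤ (2 * √2 - 1) / 7 := by linarith
  refine le_of_sq_le_sq ?_ (mul_nonneg hk dist_nonneg)
  rw [mul_pow, d1, d2, ← mul_div_assoc]
  refine div_le_div_of_nonneg_right ?_ (by positivity)
  have hk2 : ((2 * √2 - 1) / 7)^2 = (9 - 4 * √2) / 49 := by
    rw [div_pow]; nlinarith
  rw [hk2]
  unfold CoreIneq at hcore
  have hpos : 0 ≤ (9 - 4 * √2) / 49 := by rw [← hk2]; positivity
  have hm := mul_le_mul_of_nonneg_left hcore hpos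
  have e1 : (9 - 4 * √2) / 49 * ((8 + 4 * √2) * (a * b * c * pFive a b c)) =
      (a * b * c * pFive a b c) - (9 - 4 * √2) / 49 * (a * b * c * pFive a b c) := by
    linear_combination (-16 / 49 * (a * b * c * pFive a b c)) * s2
  rw [e1] at hm
  generalize (9 - 4 * √2) / 49 = k at *
  unfold pFive qSix wFour at hm
  linarith
end

section
/- In any nondegenerate triangle, the distance from the symmedian point X6 to the incenter X1 satisfies dist(X6, X1) ≤ (√2 − 1)·dist(X6, X10), where X10 is the Spieker center. -/
/-- The polynomial inequality in the elementary symmetric functions. -/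
lemma sym_core (p q r k : ℝ) (hp : 0 ≤ p) (hq : 0 ≤ q) (hr : 0 ≤ r) (hk : 0 ≤ k)
    (hk2 : k ^ 2 = 1 - 2 * k) (hpq : 3 * q ≤ p ^ 2)
    (hD : (2 * p ^ 3 - 9 * p * q + 27 * r) ^ 2 ≤ 4 * (p ^ 2 - 3 * q) ^ 3) :
    0 ≤ p * (p ^ 2 - 4 * q) * (k ^ 2 * p ^ 4 - q ^ 2)
      + r * (11 * k ^ 2 * p ^ 4 - (6 * k ^ 2 + 2) * p ^ 2 * q - (4 - k ^ 2) * q ^ 2)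
      + 3 * (1 - k ^ 2) * p * r ^ 2 := by
  have hk41 : (41 : ℝ) / 100 ≤ k := by nlinarith
  have hk42 : k ≤ (42 : ℝ) / 100 := by nlinarith
  have ht1 : (16 : ℝ) / 100 ≤ k ^ 2 := by nlinarith
  have ht2 : k ^ 2 ≤ (18 : ℝ) / 100 := by nlinarith
  have hcoef : 0 ≤ 11 * k ^ 2 * p ^ 4 - (6 * k ^ 2 + 2) * p ^ 2 * q - (4 - k ^ 2) * q ^ 2 := by
    have h1 : 3 * (p ^ 2 * q) ≤ p ^ 4 := by nlinarith [sq_nonneg p]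
    have h2 : 9 * q ^ 2 ≤ p ^ 4 := by nlinarith [sq_nonneg p]
    have h4 : 0 ≤ p ^ 4 := by positivity
    have h5 := mul_nonneg (by linarith : 0 ≤ 6 * k ^ 2 + 2) (sub_nonneg.2 h1)
    have h6 := mul_nonneg (by linarith : 0 ≤ 4 - k ^ 2) (sub_nonneg.2 h2)
    have h7 := mul_nonneg (sub_nonneg.2 ht1) h4
    nlinarith
  have h1t : 0 ≤ 3 * (1 - k ^ 2) * p := mul_nonneg (by linarith) hp
  by_cases hc : 4 * q ≤ p ^ 2
  · have h2 : 16 * q ^ 2 ≤ p ^ 4 := by nlinarith [sq_nonneg p]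
    have h4 : 0 ≤ p ^ 4 := by positivity
    have h3 : 0 ≤ k ^ 2 * p ^ 4 - q ^ 2 := by nlinarith [mul_nonneg (sub_nonneg.2 ht1) h4]
    have := mul_nonneg (mul_nonneg hp (sub_nonneg.2 hc)) h3
    have := mul_nonneg hr hcoef
    have := mul_nonneg h1t (sq_nonneg r)
    linarith
  · push Not at hc
    obtain ⟨W, hW0, hW⟩ : ∃ W : ℝ, 0 ≤ W ∧ W ^ 2 = p ^ 2 - 3 * q :=
      ⟨Real.sqrt (p ^ 2 - 3 * q), Real.sqrt_nonneg _, Real.sq_sqrt (by linarith)⟩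
    have hWp : 2 * W ≤ p := by
      nlinarith
    have hq' : q = (p ^ 2 - W ^ 2) / 3 := by linarith
    have hD' : |2 * p ^ 3 - 9 * p * q + 27 * r| ≤ 2 * W ^ 3 := by
      apply abs_le_of_sq_le_sq _ (by positivity)
      rw [← hW] at hD
      nlinarith
    have hr1 : (p + W) ^ 2 * (p - 2 * W) / 27 ≤ r := by
      have := (abs_le.1 hD').1
      rw [hq'] at this
      nlinarith
    have hr0 : 0 ≤ (p + W) ^ 2 * (p - 2 * W) / 27 := by
      have : 0 ≤ p - 2 * W := by linarith
      positivity
    set m := (p + W) ^ 2 * (p - 2 * W) / 27 with hm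
    have e1 := mul_le_mul_of_nonneg_right hr1 hcoef
    have e2 := mul_le_mul_of_nonneg_left (pow_le_pow_left₀ hr0 hr1 2) h1t
    have key : 0 ≤ p * (p ^ 2 - 4 * q) * (k ^ 2 * p ^ 4 - q ^ 2)
      + m * (11 * k ^ 2 * p ^ 4 - (6 * k ^ 2 + 2) * p ^ 2 * q - (4 - k ^ 2) * q ^ 2)
      + 3 * (1 - k ^ 2) * p * m ^ 2 := by
      have hQ : 2 * (2 * (p + W)) * (2 * p - W) ≤
          k * ((2 * (p + W)) ^ 2 + 2 * (2 * (p + W)) * (2 * p - W) + 2 * (2 * p - W) ^ 2) := by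
        have := mul_nonneg hk (sq_nonneg (2 * (p + W) - (k + 1) * (2 * p - W)))
        have e : k * (2 * (p + W) - (k + 1) * (2 * p - W)) ^ 2 =
          k * ((2 * (p + W)) ^ 2 + 2 * (2 * (p + W)) * (2 * p - W) + 2 * (2 * p - W) ^ 2)
          - 2 * (2 * (p + W)) * (2 * p - W) := by
          linear_combination (k * (2 * p - W) ^ 2 - 2 * (2 * (p + W)) * (2 * p - W)) * hk2
        linarith
      have hnn : 0 ≤ 2 * (2 * (p + W)) * (2 * p - W) := by
        have : 0 ≤ 2 * p - W := by linarith
        positivity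
      have hS := pow_le_pow_left₀ hnn hQ 2
      have hfin := mul_nonneg (mul_nonneg (sq_nonneg W) (by linarith : 0 ≤ p - 2 * W))
        (sub_nonneg.2 hS)
      refine (div_nonneg hfin (by norm_num : (0 : ℝ) ≤ 972)).trans_eq ?_
      rw [hm, hq']
      ring
    linarith

lemma ravi_core (x y z k : ℝ) (hx : 0 ≤ x) (hy : 0 ≤ y) (hz : 0 ≤ z) (hk : 0 ≤ k)
    (hk2 : k ^ 2 = 1 - 2 * k) :
    0 ≤ (x+y+z) * ((x+y+z) ^ 2 - 4 * (x*y+y*z+z*x)) * (k ^ 2 * (x+y+z) ^ 4 - (x*y+y*z+z*x) ^ 2)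
      + (x*y*z) * (11 * k ^ 2 * (x+y+z) ^ 4 - (6 * k ^ 2 + 2) * (x+y+z) ^ 2 * (x*y+y*z+z*x)
        - (4 - k ^ 2) * (x*y+y*z+z*x) ^ 2)
      + 3 * (1 - k ^ 2) * (x+y+z) * (x*y*z) ^ 2 := by
  apply sym_core _ _ _ k (by positivity) (by positivity) (by positivity) hk hk2
  · nlinarith [sq_nonneg (x-y), sq_nonneg (y-z), sq_nonneg (z-x)]
  · have := sq_nonneg ((x-y)*(y-z)*(z-x))
    nlinarith

lemma side_core (a b c k : ℝ) (ha : a ≤ b + c) (hb : b ≤ c + a) (hc : c ≤ a + b) (hk : 0 ≤ k)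
    (hk2 : k ^ 2 = 1 - 2 * k) (s q : ℝ) (hs : s = a + b + c) (hq : q = a ^ 2 + b ^ 2 + c ^ 2) :
    4 * -(a ^ 2 * (b ^ 2 * s - b * q) * (c ^ 2 * s - c * q)
      + b ^ 2 * (c ^ 2 * s - c * q) * (a ^ 2 * s - a * q)
      + c ^ 2 * (a ^ 2 * s - a * q) * (b ^ 2 * s - b * q)) ≤
    k ^ 2 * -(a ^ 2 * (2 * b ^ 2 * s - (c + a) * q) * (2 * c ^ 2 * s - (a + b) * q)
      + b ^ 2 * (2 * c ^ 2 * s - (a + b) * q) * (2 * a ^ 2 * s - (b + c) * q)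
      + c ^ 2 * (2 * a ^ 2 * s - (b + c) * q) * (2 * b ^ 2 * s - (c + a) * q)) := by
  obtain ⟨x, hx⟩ : ∃ x, x = (b + c - a) / 2 := ⟨_, rfl⟩
  obtain ⟨y, hy⟩ : ∃ y, y = (c + a - b) / 2 := ⟨_, rfl⟩
  obtain ⟨z, hz⟩ : ∃ z, z = (a + b - c) / 2 := ⟨_, rfl⟩
  have hx0 : 0 ≤ x := by linarith
  have hy0 : 0 ≤ y := by linarith
  have hz0 : 0 ≤ z := by linarith
  have ea : a = y + z := by linarith
  have eb : b = z + x := by linarith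
  have ec : c = x + y := by linarith
  have H := mul_nonneg (by positivity : 0 ≤ 16 * (x + y + z)) (ravi_core x y z k hx0 hy0 hz0 hk hk2)
  clear hx hy hz ha hb hc
  subst ea eb ec
  subst hs hq
  rw [← sub_nonneg]
  refine H.trans_eq ?_
  ring

lemma norm_comb (A B C : EuclideanSpace ℝ (Fin 2)) (u v w : ℝ) (h : u + v + w = 0) :
    ‖u • A + v • B + w • C‖ ^ 2 =
      -(dist B C ^ 2 * v * w + dist C A ^ 2 * w * u + dist A B ^ 2 * u * v) := by
  have hw : w = -u - v := by linarith
  subst hw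
  simp only [EuclideanSpace.dist_eq, EuclideanSpace.norm_eq, Fin.sum_univ_two, Real.dist_eq, sq_abs,
    Real.norm_eq_abs]
  rw [Real.sq_sqrt (by positivity), Real.sq_sqrt (by positivity), Real.sq_sqrt (by positivity),
    Real.sq_sqrt (by positivity)]
  simp only [PiLp.add_apply, PiLp.smul_apply, smul_eq_mul]
  ring

lemma dist_bary (A B C : EuclideanSpace ℝ (Fin 2)) (x y z x' y' z' : ℝ) (h : x + y + z ≠ 0)
    (h' : x' + y' + z' ≠ 0) (S S' : ℝ) (hS : S = x + y + z) (hS' : S' = x' + y' + z') :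
    (S * S' * dist (bary A B C x y z) (bary A B C x' y' z')) ^ 2 =
      -(dist B C ^ 2 * (y * S' - y' * S) * (z * S' - z' * S)
      + dist C A ^ 2 * (z * S' - z' * S) * (x * S' - x' * S)
      + dist A B ^ 2 * (x * S' - x' * S) * (y * S' - y' * S)) := by
  rw [← norm_comb A B C _ _ _ (by subst hS hS'; ring)]
  have : (S * S') • (bary A B C x y z - bary A B C x' y' z') =
      (x * S' - x' * S) • A + (y * S' - y' * S) • B + (z * S' - z' * S) • C := by
    unfold bary
    rw [← hS, ← hS']
    rw [← hS] at h
    rw [← hS'] at h'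
    ext i
    simp only [PiLp.add_apply, PiLp.smul_apply, PiLp.sub_apply, smul_eq_mul]
    field_simp
    ring
  rw [← this, norm_smul, dist_eq_norm, mul_pow, mul_pow (‖S * S'‖), Real.norm_eq_abs, sq_abs]

theorem stmt_17 (A B C : EuclideanSpace ℝ (Fin 2))
    (h : AffineIndependent ℝ ![A, B, C]) :
    dist (tcenter (fun a b c => a^2) A B C) (tcenter (fun a b c => a) A B C) ≤ (Real.sqrt 2 - 1) * dist (tcenter (fun a b c => a^2) A B C) (tcenter (fun a b c => b + c) A B C) := by
  have hBC : 0 < dist B C := dist_pos.2 fun e => by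
    have := h.injective.ne (show (1 : Fin 3) ≠ 2 by decide)
    exact this (by simpa using e)
  have h1 : dist B C ≤ dist C A + dist A B := by
    have := dist_triangle B A C
    rw [dist_comm B A, dist_comm A C] at this; linarith
  have h2 : dist C A ≤ dist A B + dist B C := by
    have := dist_triangle C B A
    rw [dist_comm C B, dist_comm B A] at this; linarith
  have h3 : dist A B ≤ dist B C + dist C A := by
    have := dist_triangle A C B
    rw [dist_comm A C, dist_comm C B] at this; linarith
  have hk : 0 ≤ Real.sqrt 2 - 1 := by
    have : (1 : ℝ) ≤ Real.sqrt 2 := Real.one_le_sqrt.2 (by norm_num)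
    linarith
  have hk2 : (Real.sqrt 2 - 1) ^ 2 = 1 - 2 * (Real.sqrt 2 - 1) := by
    have := Real.sq_sqrt (show (0 : ℝ) ≤ 2 by norm_num)
    nlinarith
  have hb0 : 0 ≤ dist C A := dist_nonneg
  have hc0 : 0 ≤ dist A B := dist_nonneg
  have e1 := fun hh hh' => dist_bary A B C (dist B C ^ 2) (dist C A ^ 2) (dist A B ^ 2)
    (dist B C) (dist C A) (dist A B) hh hh' _ _ rfl rfl
  have e2 := fun hh hh' => dist_bary A B C (dist B C ^ 2) (dist C A ^ 2) (dist A B ^ 2)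
    (dist C A + dist A B) (dist A B + dist B C) (dist B C + dist C A) hh hh' _ _ rfl rfl
  have core := side_core _ _ _ _ h1 h2 h3 hk hk2 _ _ rfl rfl
  unfold tcenter
  beta_reduce
  generalize dist (bary A B C (dist B C ^ 2) (dist C A ^ 2) (dist A B ^ 2))
    (bary A B C (dist B C) (dist C A) (dist A B)) = d1 at *
  have hd2 : 0 ≤ dist (bary A B C (dist B C ^ 2) (dist C A ^ 2) (dist A B ^ 2))
    (bary A B C (dist C A + dist A B) (dist A B + dist B C) (dist B C + dist C A)) := dist_nonneg
  generalize dist (bary A B C (dist B C ^ 2) (dist C A ^ 2) (dist A B ^ 2))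
    (bary A B C (dist C A + dist A B) (dist A B + dist B C) (dist B C + dist C A)) = d2 at *
  generalize Real.sqrt 2 - 1 = k at *
  generalize dist B C = a at *
  generalize dist C A = b at *
  generalize dist A B = c at *
  have hs : 0 < a + b + c := by linarith
  have hq : 0 < a ^ 2 + b ^ 2 + c ^ 2 := by positivity
  have e1 := e1 hq.ne' hs.ne'
  have e2 := e2 hq.ne' (by linarith)
  have hM : 0 < 2 * (a ^ 2 + b ^ 2 + c ^ 2) * (a + b + c) := by positivity
  have hM2 := pow_pos hM 2
  apply le_of_abs_le
  apply abs_le_of_sq_le_sq _ (by positivity)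
  refine le_of_mul_le_mul_left ?_ hM2
  have E1 : (2 * (a ^ 2 + b ^ 2 + c ^ 2) * (a + b + c)) ^ 2 * d1 ^ 2 =
    4 * ((a ^ 2 + b ^ 2 + c ^ 2) * (a + b + c) * d1) ^ 2 := by ring
  have E2 : (2 * (a ^ 2 + b ^ 2 + c ^ 2) * (a + b + c)) ^ 2 * (k * d2) ^ 2 =
    k ^ 2 * ((a ^ 2 + b ^ 2 + c ^ 2) * (b + c + (c + a) + (a + b)) * d2) ^ 2 := by ring
  rw [E1, E2, e1, e2]
  refine core.trans_eq ?_
  ring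
end
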